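/- arXiv:2002.04346 — 2 statements merged into one kernel-verified Lean document; each statement's English description precedes it below -/
import Mathlib

section
/- Let b(z) = p(z) s(z) f(z) be a Wiener–Hopf factorisation of an n×n real polynomial matrix b with f(z) = F(1/z) and f₀ = F(0) nonsingular. Then: (i) with f^{(1)}(z) := f(z) f₀^{−1}, one has b(z) = (p(z) s(z) f^{(1)}(z)) · f₀ as rational matrix functions, f^{(1)}(z) = F^{(1)}(1/z) with F^{(1)}(0) = I_n and det F^{(1)}(w) ≠ 0 for all complex |w| ≤ 1 (so p s f^{(1)} is again a WHF with the same partial indices). (ii) If in addition the partial indices are of type (κ,k) with 0 < k < n, the factorisation is the unique canonical representative (p₀ = [[I_k,0],[p_{0,21},I_{n−k}]], p_{1,[1:k,k+1:n]} = 0, last n−k rows of f_{κ+1} zero), and b₀ := b(0) is nonsingular, then with f^{(2)}(z) := f(z) b₀^{−1} one has b(z) = (p(z) s(z) f^{(2)}(z)) · b₀ and the stacked matrix whose first k rows are the first k rows of the coefficient f^{(2)}_{κ+1} and whose last n−k rows are the last n−k rows of the coefficient f^{(2)}_{κ} equals [[I_k, 0],[−p_{0,21}, I_{n−k}]]. -/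
open Polynomial Matrix

/-- Evaluation of a real polynomial matrix at a complex point (entrywise). -/
noncomputable def evalMat {n : ℕ} (M : Matrix (Fin n) (Fin n) (Polynomial ℝ)) (z : ℂ) :
    Matrix (Fin n) (Fin n) ℂ :=
  M.map (fun r => Polynomial.aeval z r)

/-- A polynomial matrix viewed as a matrix over the field of real rational functions. -/
noncomputable def polyToRat {n : ℕ} (M : Matrix (Fin n) (Fin n) (Polynomial ℝ)) :
    Matrix (Fin n) (Fin n) (RatFunc ℝ) :=
  M.map (algebraMap (Polynomial ℝ) (RatFunc ℝ))

/-- The rational matrix F(1/z) obtained from a polynomial matrix F by substituting 1/z. -/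
noncomputable def invSub {n : ℕ} (F : Matrix (Fin n) (Fin n) (Polynomial ℝ)) :
    Matrix (Fin n) (Fin n) (RatFunc ℝ) :=
  F.map (fun r => Polynomial.aeval ((RatFunc.X : RatFunc ℝ)⁻¹) r)

/-- The diagonal matrix diag(z^{κ₁},…,z^{κₙ}) over ℝ(z). -/
noncomputable def sMat (n : ℕ) (κ : Fin n → ℤ) : Matrix (Fin n) (Fin n) (RatFunc ℝ) :=
  Matrix.diagonal (fun i => (RatFunc.X : RatFunc ℝ) ^ (κ i))

/-- `IsWHF b p F κ` : b(z) = p(z) · diag(z^{κᵢ}) · F(1/z) is a Wiener–Hopf factorisation. -/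
structure IsWHF {n : ℕ} (b p F : Matrix (Fin n) (Fin n) (Polynomial ℝ))
    (κ : Fin n → ℤ) : Prop where
  p_noZero : ∀ z : ℂ, ‖z‖ ≤ 1 → (evalMat p z).det ≠ 0
  F_noZero : ∀ w : ℂ, ‖w‖ ≤ 1 → (evalMat F w).det ≠ 0
  anti : ∀ i j : Fin n, i ≤ j → κ j ≤ κ i
  eq : polyToRat b = polyToRat p * sMat n κ * invSub F

/-- Partial indices of type (κ,k): the first k indices equal κ+1, the rest κ. -/
def idx (n : ℕ) (κ k : ℕ) : Fin n → ℤ := fun i => if (i : ℕ) < k then (κ : ℤ) + 1 else (κ : ℤ)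

theorem invSub_mul {n : ℕ} (A B : Matrix (Fin n) (Fin n) (Polynomial ℝ)) :
    invSub (A * B) = invSub A * invSub B :=
  Matrix.map_mul (f := ((Polynomial.aeval ((RatFunc.X : RatFunc ℝ)⁻¹) :
    Polynomial ℝ →ₐ[ℝ] RatFunc ℝ) : Polynomial ℝ →+* RatFunc ℝ))

theorem polyToRat_mul {n : ℕ} (A B : Matrix (Fin n) (Fin n) (Polynomial ℝ)) :
    polyToRat (A * B) = polyToRat A * polyToRat B :=
  Matrix.map_mul (f := algebraMap (Polynomial ℝ) (RatFunc ℝ))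

theorem evalMat_mul {n : ℕ} (A B : Matrix (Fin n) (Fin n) (Polynomial ℝ)) (z : ℂ) :
    evalMat (A * B) z = evalMat A z * evalMat B z :=
  Matrix.map_mul (f := ((Polynomial.aeval z :
    Polynomial ℝ →ₐ[ℝ] ℂ) : Polynomial ℝ →+* ℂ))

theorem invSub_C {n : ℕ} (A : Matrix (Fin n) (Fin n) ℝ) :
    invSub (A.map Polynomial.C) = A.map (algebraMap ℝ (RatFunc ℝ)) := by
  ext i j
  simp [invSub]

theorem polyToRat_C {n : ℕ} (A : Matrix (Fin n) (Fin n) ℝ) :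
    polyToRat (A.map Polynomial.C) = A.map (algebraMap ℝ (RatFunc ℝ)) := by
  ext i j
  simp only [polyToRat, Matrix.map_apply]
  rw [IsScalarTower.algebraMap_apply ℝ (Polynomial ℝ) (RatFunc ℝ)]
  rfl

theorem evalMat_C {n : ℕ} (A : Matrix (Fin n) (Fin n) ℝ) (z : ℂ) :
    evalMat (A.map Polynomial.C) z = A.map (algebraMap ℝ ℂ) := by
  ext i j
  simp [evalMat]

theorem matCoeff_mul_C {n : ℕ} (A : Matrix (Fin n) (Fin n) (Polynomial ℝ))
    (B : Matrix (Fin n) (Fin n) ℝ) (m : ℕ) (i j : Fin n) :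
    ((A * B.map Polynomial.C) i j).coeff m = ∑ l, (A i l).coeff m * B l j := by
  simp [Matrix.mul_apply, Polynomial.finsetSum_coeff]

theorem factor_eq {n : ℕ} (b p F : Matrix (Fin n) (Fin n) (Polynomial ℝ))
    (κ : Fin n → ℤ) (h : polyToRat b = polyToRat p * sMat n κ * invSub F)
    (M : Matrix (Fin n) (Fin n) ℝ) (hM : M.det ≠ 0) :
    polyToRat b = (polyToRat p * sMat n κ * invSub (F * (M⁻¹).map Polynomial.C)) *
        (M.map (algebraMap ℝ (RatFunc ℝ))) := by
  have h1 : (M⁻¹).map (algebraMap ℝ (RatFunc ℝ)) * M.map (algebraMap ℝ (RatFunc ℝ)) = 1 := by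
    rw [← Matrix.map_mul, Matrix.nonsing_inv_mul _ (isUnit_iff_ne_zero.mpr hM)]
    exact Matrix.map_one _ (map_zero _) (map_one _)
  rw [invSub_mul, invSub_C, h]
  simp only [Matrix.mul_assoc]
  rw [h1, Matrix.mul_one]

theorem F0_det {n : ℕ} (F : Matrix (Fin n) (Fin n) (Polynomial ℝ))
    (h : (evalMat F 0).det ≠ 0) : (F.map (fun r => r.coeff 0)).det ≠ 0 := by
  intro h0
  apply h
  have : evalMat F 0 = (algebraMap ℝ ℂ).mapMatrix (F.map (fun r => r.coeff 0)) := by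
    ext i j
    simp [evalMat, Polynomial.aeval_def, Polynomial.eval₂_at_zero]
  rw [this, ← RingHom.map_det, h0, map_zero]

theorem reflect_rat (f : Polynomial ℝ) (N : ℕ) (hf : f.natDegree ≤ N) :
    algebraMap (Polynomial ℝ) (RatFunc ℝ) (Polynomial.reflect N f) =
      RatFunc.X ^ N * Polynomial.aeval ((RatFunc.X : RatFunc ℝ)⁻¹) f := by
  have hX : (RatFunc.X : RatFunc ℝ) ≠ 0 := RatFunc.X_ne_zero
  letI : Invertible ((RatFunc.X : RatFunc ℝ)⁻¹) := invertibleOfNonzero (inv_ne_zero hX)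
  have h := Polynomial.eval₂_reflect_mul_pow (algebraMap ℝ (RatFunc ℝ))
    ((RatFunc.X : RatFunc ℝ)⁻¹) N f hf
  rw [Polynomial.aeval_def, ← h, invOf_eq_inv, inv_inv, ← Polynomial.aeval_def,
    mul_comm, mul_assoc, ← mul_pow, inv_mul_cancel₀ hX, one_pow, mul_one]
  rw [← RatFunc.algebraMap_X, Polynomial.aeval_algebraMap_apply]
  simp

theorem detF1 {n : ℕ} (F : Matrix (Fin n) (Fin n) (Polynomial ℝ))
    (M : Matrix (Fin n) (Fin n) ℝ) (hM : M.det ≠ 0)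
    (h : ∀ w : ℂ, ‖w‖ ≤ 1 → (evalMat F w).det ≠ 0) :
    ∀ w : ℂ, ‖w‖ ≤ 1 → (evalMat (F * (M⁻¹).map Polynomial.C) w).det ≠ 0 := by
  intro w hw
  rw [evalMat_mul, evalMat_C, Matrix.det_mul]
  refine mul_ne_zero (h w hw) ?_
  change ((algebraMap ℝ ℂ).mapMatrix M⁻¹).det ≠ 0
  rw [← RingHom.map_det, Matrix.det_nonsing_inv, Ring.inverse_eq_inv']
  exact (_root_.map_ne_zero _).mpr (inv_ne_zero hM)

/-- the two normalisations b = (p s f⁽¹⁾)·f₀ and b = (p s f⁽²⁾)·b₀ of a WHF. -/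
theorem stmt2 {n : ℕ} (b p F : Matrix (Fin n) (Fin n) (Polynomial ℝ))
    (κfun : Fin n → ℤ) (hWHF : IsWHF b p F κfun) :
    -- (i) with F⁽¹⁾ := F · f₀⁻¹ :
    (letI F0 : Matrix (Fin n) (Fin n) ℝ := F.map (fun r => r.coeff 0)
     letI F1 : Matrix (Fin n) (Fin n) (Polynomial ℝ) := F * (F0⁻¹).map Polynomial.C
     polyToRat b = (polyToRat p * sMat n κfun * invSub F1) *
        (F0.map (algebraMap ℝ (RatFunc ℝ))) ∧
     F1.map (fun r => r.coeff 0) = (1 : Matrix (Fin n) (Fin n) ℝ) ∧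
     (∀ w : ℂ, ‖w‖ ≤ 1 → (evalMat F1 w).det ≠ 0) ∧
     IsWHF (b * (F0⁻¹).map Polynomial.C) p F1 κfun) ∧
    -- (ii) canonical case with nonsingular b₀ and F⁽²⁾ := F · b₀⁻¹ :
    (∀ κ k : ℕ, 0 < k → k < n → κfun = idx n κ k →
      -- canonical representative conditions
      (∀ i j : Fin n, ((i : ℕ) < k ↔ (j : ℕ) < k) →
        (p i j).coeff 0 = if i = j then (1 : ℝ) else 0) →
      (∀ i j : Fin n, (i : ℕ) < k → k ≤ (j : ℕ) → (p i j).coeff 0 = 0) →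
      (∀ i j : Fin n, (i : ℕ) < k → k ≤ (j : ℕ) → (p i j).coeff 1 = 0) →
      (∀ i j : Fin n, (F i j).degree ≤ ((κ + 1 : ℕ) : WithBot ℕ)) →
      (∀ i j : Fin n, k ≤ (i : ℕ) → (F i j).coeff (κ + 1) = 0) →
      letI b0 : Matrix (Fin n) (Fin n) ℝ := b.map (fun r => r.coeff 0)
      b0.det ≠ 0 →
      letI F2 : Matrix (Fin n) (Fin n) (Polynomial ℝ) := F * (b0⁻¹).map Polynomial.C
      polyToRat b = (polyToRat p * sMat n κfun * invSub F2) *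
        (b0.map (algebraMap ℝ (RatFunc ℝ))) ∧
      -- the stacked matrix of rows of f⁽²⁾_{κ+1} (first k) and f⁽²⁾_{κ} (last n-k)
      (∀ i j : Fin n,
        (if (i : ℕ) < k then (F2 i j).coeff (κ + 1) else (F2 i j).coeff κ) =
          if i = j then (1 : ℝ)
          else if k ≤ (i : ℕ) ∧ (j : ℕ) < k then -((p i j).coeff 0) else 0)) := by
  have hF0 := F0_det F (hWHF.F_noZero 0 (by simp))
  refine ⟨⟨factor_eq b p F κfun hWHF.eq _ hF0, ?_, ?_, ?_⟩, ?_⟩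
  · ext i j
    rw [← Matrix.mul_nonsing_inv _ (isUnit_iff_ne_zero.mpr hF0), Matrix.map_apply, matCoeff_mul_C,
      Matrix.mul_apply]
    rfl
  · exact detF1 F _ hF0 hWHF.F_noZero
  · refine ⟨hWHF.p_noZero, detF1 F _ hF0 hWHF.F_noZero, hWHF.anti, ?_⟩
    rw [polyToRat_mul, polyToRat_C, hWHF.eq, invSub_mul, invSub_C]
    simp only [Matrix.mul_assoc]
  · intro κ k hk hkn hκ hp1 hp2 hp3 hdeg hlast hb0
    refine ⟨factor_eq b p F κfun hWHF.eq _ hb0, ?_⟩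
    -- the natural-number partial indices
    set N : Fin n → ℕ := fun i => if (i : ℕ) < k then κ + 1 else κ with hN
    set G : Matrix (Fin n) (Fin n) (Polynomial ℝ) :=
      Matrix.of fun i j => Polynomial.reflect (N i) (F i j) with hG
    set S : Matrix (Fin n) (Fin n) ℝ := Matrix.of fun i j => (F i j).coeff (N i) with hS
    set b0 : Matrix (Fin n) (Fin n) ℝ := b.map (fun r => r.coeff 0) with hb0def
    set P0 : Matrix (Fin n) (Fin n) ℝ := p.map (fun r => r.coeff 0) with hP0
    have hnat : ∀ i j, (F i j).natDegree ≤ N i := by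
      intro i j
      have h1 : (F i j).natDegree ≤ κ + 1 := Polynomial.natDegree_le_of_degree_le (hdeg i j)
      by_cases hi : (i : ℕ) < k
      · simpa [hN, hi] using h1
      · simp only [hN, hi, if_false]
        rw [Polynomial.natDegree_le_iff_coeff_eq_zero]
        intro m hm
        rcases Nat.lt_or_ge (κ + 1) m with h | h
        · exact Polynomial.coeff_eq_zero_of_natDegree_lt (by omega)
        · have : m = κ + 1 := by omega
          subst this
          exact hlast i j (by omega)
    have hGr : polyToRat G = sMat n κfun * invSub F := by
      ext i j
      rw [sMat, Matrix.diagonal_mul]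
      simp only [polyToRat, invSub, Matrix.map_apply, hG, Matrix.of_apply]
      rw [reflect_rat _ _ (hnat i j), hκ]
      congr 1
      by_cases hi : (i : ℕ) < k
      · simp only [hN, idx, hi, if_true]
        exact_mod_cast (zpow_natCast (RatFunc.X : RatFunc ℝ) (κ + 1)).symm
      · simp only [hN, idx, hi, if_false]
        exact (zpow_natCast (RatFunc.X : RatFunc ℝ) κ).symm
    have hbG : b = p * G := by
      apply Matrix.map_injective (RatFunc.algebraMap_injective ℝ)
      change polyToRat b = polyToRat (p * G)
      rw [polyToRat_mul, hGr, hWHF.eq, Matrix.mul_assoc]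
    have hb0S : b0 = P0 * S := by
      ext i j
      simp only [hb0def, hbG, hP0, hS, hG, Matrix.map_apply, Matrix.mul_apply, Matrix.of_apply,
        Polynomial.finsetSum_coeff, Polynomial.mul_coeff_zero, Polynomial.coeff_reflect]
      simp [Polynomial.revAt_le (Nat.zero_le _)]
    have hinv : P0 * (S * b0⁻¹) = 1 := by
      rw [← Matrix.mul_assoc, ← hb0S, Matrix.mul_nonsing_inv _ (isUnit_iff_ne_zero.mpr hb0)]
    set Q : Matrix (Fin n) (Fin n) ℝ := Matrix.of fun i j =>
      if i = j then (1 : ℝ)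
      else if k ≤ (i : ℕ) ∧ (j : ℕ) < k then -((p i j).coeff 0) else 0 with hQ
    have hPform : P0 = 2 • (1 : Matrix (Fin n) (Fin n) ℝ) - Q := by
      ext i j
      simp only [hP0, hQ, Matrix.map_apply, Matrix.sub_apply, Matrix.smul_apply, Matrix.of_apply,
        Matrix.one_apply]
      by_cases hi : (i : ℕ) < k <;> by_cases hj : (j : ℕ) < k
      · rw [hp1 i j (by tauto)]
        have : ¬ k ≤ (i : ℕ) := by omega
        split_ifs <;> norm_num <;> tauto
      · rw [hp2 i j hi (by omega)]
        have : i ≠ j := by rintro rfl; exact hj hi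
        simp [this, hj]
      · have : i ≠ j := by rintro rfl; exact hi hj
        have : k ≤ (i : ℕ) := by omega
        simp [*]
      · rw [hp1 i j (by tauto)]
        split_ifs <;> norm_num <;> tauto
    have hnil : (Q - 1) * (Q - 1) = 0 := by
      ext i j
      rw [Matrix.mul_apply]
      apply Finset.sum_eq_zero
      intro l _
      simp only [hQ, Matrix.sub_apply, Matrix.of_apply, Matrix.one_apply]
      by_cases hl : (l : ℕ) < k
      · have : ¬ k ≤ (l : ℕ) := by omega
        apply mul_eq_zero_of_right
        by_cases hlj : l = j <;> simp [hlj, this]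

      · apply mul_eq_zero_of_left
        by_cases hil : i = l <;> simp [hil, hl]
    have hQP : Q * P0 = 1 := by
      have : Q * P0 = 1 - (Q - 1) * (Q - 1) := by
        rw [hPform]; noncomm_ring
      rw [this, hnil, sub_zero]
    have hfin : S * b0⁻¹ = Q := by
      calc S * b0⁻¹ = (Q * P0) * (S * b0⁻¹) := by rw [hQP, Matrix.one_mul]
        _ = Q := by rw [Matrix.mul_assoc, hinv, Matrix.mul_one]
    intro i j
    have h := congrFun (congrFun hfin i) j
    rw [Matrix.mul_apply] at h
    simp only [hS, hQ, Matrix.of_apply] at h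
    rw [← h, matCoeff_mul_C, matCoeff_mul_C]
    by_cases hi : (i : ℕ) < k <;> simp [hN, hi]
end

section
/- Let b(z) = p(z) s(z) f(z) be a Wiener–Hopf factorisation of an n×n real polynomial matrix b with partial indices of type (κ,k), κ ≥ 0, 0 ≤ k < n (so s(z) = diag(z^{κ+1},…,z^{κ+1},z^{κ},…,z^{κ}) with the first k entries z^{κ+1}), where f(z) = f₀ + f₁z⁻¹ + ⋯ + f_{κ+1}z^{−κ−1} and, if k > 0, the last n−k rows of f_{κ+1} are zero (f_{κ+1} = 0 if k = 0). Then the polynomial det b(z) ∈ ℝ[z] has exactly nκ + k roots (counted with multiplicity, over ℂ) in the open unit disk |z| < 1, no roots with |z| = 1, and its remaining deg(det b) − (nκ + k) roots satisfy |z| > 1. -/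
open Polynomial Matrix

/-- natural-number partial indices -/
def eIdx (n κ k : ℕ) : Fin n → ℕ := fun i => if (i : ℕ) < k then κ + 1 else κ

theorem eIdx_cast (n κ k : ℕ) (i : Fin n) : idx n κ k i = (eIdx n κ k i : ℤ) := by
  unfold idx eIdx
  split_ifs <;> simp

theorem eIdx_sum {n κ k : ℕ} (hkn : k < n) : ∑ i, eIdx n κ k i = n * κ + k := by
  have h : ∀ i : Fin n, eIdx n κ k i = κ + if (i : ℕ) < k then 1 else 0 := by
    intro i; unfold eIdx; split_ifs <;> rfl
  simp only [h, Finset.sum_add_distrib]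
  have h2 : ∑ i : Fin n, (if (i : ℕ) < k then 1 else 0) = k := by
    rw [Fin.sum_univ_eq_sum_range (fun i => if i < k then 1 else 0) n, ← Finset.card_filter]
    have : (Finset.range n).filter (· < k) = Finset.range k := by
      ext x; simp; omega
    rw [this, Finset.card_range]
  rw [h2]; simp

theorem det_natDegree_le_sum {n : ℕ} (F : Matrix (Fin n) (Fin n) (Polynomial ℝ)) (e : Fin n → ℕ)
    (h : ∀ i j, (F i j).natDegree ≤ e i) : F.det.natDegree ≤ ∑ i, e i := by
  rw [← Matrix.det_transpose, Matrix.det_apply]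
  refine Polynomial.natDegree_sum_le_of_forall_le _ _ fun σ _ => ?_
  have h1 : (∏ i, Fᵀ (σ i) i).natDegree ≤ ∑ i, e i :=
    (Polynomial.natDegree_prod_le _ _).trans (Finset.sum_le_sum fun i _ => h i (σ i))
  rcases Int.units_eq_one_or (Equiv.Perm.sign σ) with hs | hs <;> rw [hs] <;> simpa using h1

theorem reflect_aeval {K : Type*} [Field K] [Algebra ℝ K] (x : K) (hx : x ≠ 0) (N : ℕ)
    (g : Polynomial ℝ) (hg : g.natDegree ≤ N) :
    aeval x (g.reflect N) = x ^ N * aeval x⁻¹ g := by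
  let _ : Invertible (x⁻¹) := invertibleOfNonzero (inv_ne_zero hx)
  have := Polynomial.eval₂_reflect_mul_pow (algebraMap ℝ K) x⁻¹ N g hg
  rw [invOf_eq_inv, inv_inv] at this
  rw [aeval_def, aeval_def, ← this]
  rw [inv_pow, mul_comm, mul_assoc, inv_mul_cancel₀ (pow_ne_zero _ hx), mul_one]

theorem det_factor {n κ k : ℕ} (hkn : k < n)
    (b p F : Matrix (Fin n) (Fin n) (Polynomial ℝ))
    (hWHF : IsWHF b p F (idx n κ k)) (hg : F.det.natDegree ≤ n * κ + k) :
    b.det = p.det * F.det.reflect (n * κ + k) := by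
  apply IsFractionRing.injective (Polynomial ℝ) (RatFunc ℝ)
  have h := congrArg Matrix.det hWHF.eq
  have hb : ∀ M : Matrix (Fin n) (Fin n) (Polynomial ℝ),
      (polyToRat M).det = algebraMap _ (RatFunc ℝ) M.det := fun M =>
    ((algebraMap (Polynomial ℝ) (RatFunc ℝ)).map_det M).symm
  have hF : (invSub F).det = aeval ((RatFunc.X : RatFunc ℝ)⁻¹) F.det :=
    ((aeval ((RatFunc.X : RatFunc ℝ)⁻¹)).map_det F).symm
  have hs : (sMat n (idx n κ k)).det = RatFunc.X ^ (n * κ + k) := by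
    unfold sMat
    simp only [Matrix.det_diagonal, eIdx_cast, zpow_natCast]
    rw [Finset.prod_pow_eq_pow_sum, eIdx_sum hkn]
  rw [Matrix.det_mul, Matrix.det_mul, hb, hb, hs, hF, mul_assoc,
    ← reflect_aeval _ RatFunc.X_ne_zero _ _ hg] at h
  rw [h, map_mul]
  congr 1
  rw [← RatFunc.algebraMap_X, aeval_algebraMap_apply, aeval_X_left_apply]

theorem evalMat_det {n : ℕ} (M : Matrix (Fin n) (Fin n) (Polynomial ℝ)) (z : ℂ) :
    (evalMat M z).det = aeval z M.det :=
  ((aeval z).map_det M).symm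

open scoped Classical

/-- a WHF with partial indices of type (κ,k) pins down the number of
determinantal roots of b inside the unit circle as nκ + k; none lie on the circle and
the remaining deg(det b) - (nκ + k) lie outside. -/
theorem stmt12 {n κ k : ℕ} (hkn : k < n)
    (b p F : Matrix (Fin n) (Fin n) (Polynomial ℝ))
    (hWHF : IsWHF b p F (idx n κ k))
    (hFdeg : ∀ i j : Fin n, (F i j).degree ≤ ((κ + 1 : ℕ) : WithBot ℕ))
    (hFlast : ∀ i j : Fin n, k ≤ (i : ℕ) → (F i j).coeff (κ + 1) = 0) :
    (((b.det.map (algebraMap ℝ ℂ)).roots.filter fun z => ‖z‖ < 1).card = n * κ + k) ∧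
    (∀ z ∈ (b.det.map (algebraMap ℝ ℂ)).roots, ‖z‖ ≠ 1) ∧
    (((b.det.map (algebraMap ℝ ℂ)).roots.filter fun z => 1 < ‖z‖).card =
      (b.det.map (algebraMap ℝ ℂ)).natDegree - (n * κ + k)) := by
  have hdeg : F.det.natDegree ≤ n * κ + k := by
    rw [← eIdx_sum (κ := κ) hkn]
    refine det_natDegree_le_sum F _ fun i j => ?_
    have h1 : (F i j).natDegree ≤ κ + 1 := natDegree_le_of_degree_le (hFdeg i j)
    unfold eIdx
    split_ifs with hi
    · exact h1
    · have h2 := hFlast i j (not_lt.mp hi)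
      by_contra hc
      have h3 : (F i j).natDegree = κ + 1 := by omega
      have h4 : (F i j).leadingCoeff = 0 := by rw [leadingCoeff, h3, h2]
      rw [leadingCoeff_eq_zero] at h4
      rw [h4] at h3
      simp at h3
  have hp : ∀ z : ℂ, ‖z‖ ≤ 1 → aeval z p.det ≠ 0 := fun z hz => by
    rw [← evalMat_det]; exact hWHF.p_noZero z hz
  have hF : ∀ z : ℂ, ‖z‖ ≤ 1 → aeval z F.det ≠ 0 := fun z hz => by
    rw [← evalMat_det]; exact hWHF.F_noZero z hz
  have hb := det_factor hkn b p F hWHF hdeg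
  set N := n * κ + k with hN
  set P := p.det.map (algebraMap ℝ ℂ) with hP
  set R := (F.det.reflect N).map (algebraMap ℝ ℂ) with hR
  have hPR : b.det.map (algebraMap ℝ ℂ) = P * R := by rw [hb, Polynomial.map_mul]
  have hRe : ∀ z : ℂ, 1 ≤ ‖z‖ → R.eval z ≠ 0 := by
    intro z hz
    have hz0 : z ≠ 0 := by rintro rfl; simp at hz; linarith
    rw [hR, eval_map_algebraMap, reflect_aeval z hz0 N _ hdeg]
    refine mul_ne_zero (pow_ne_zero _ hz0) (hF _ ?_)
    rw [norm_inv]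
    exact inv_le_one_of_one_le₀ hz
  have hPe : ∀ z : ℂ, ‖z‖ ≤ 1 → P.eval z ≠ 0 := by
    intro z hz
    rw [hP, eval_map_algebraMap]
    exact hp z hz
  have hP0 : P ≠ 0 := by
    intro h; apply hPe 0 (by simp); rw [h]; simp
  have hR0 : R ≠ 0 := by
    intro h; apply hRe 1 (by simp); rw [h]; simp
  have hRdeg : R.natDegree = N := by
    rw [hR, natDegree_map]
    have hc : (F.det.reflect N).coeff N ≠ 0 := by
      rw [coeff_reflect, revAt_le le_rfl, Nat.sub_self]
      intro h
      apply hF 0 (by simp)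
      rw [← coeff_zero_eq_aeval_zero', h, map_zero]
    refine le_antisymm ?_ (le_natDegree_of_ne_zero hc)
    rw [natDegree_le_iff_coeff_eq_zero]
    intro m hm
    rw [coeff_reflect, revAt_eq_self_of_lt hm]
    exact coeff_eq_zero_of_natDegree_lt (lt_of_le_of_lt hdeg hm)
  have hRr : ∀ z ∈ R.roots, ‖z‖ < 1 := by
    intro z hz
    by_contra hc
    exact hRe z (not_lt.mp hc) ((mem_roots hR0).mp hz)
  have hPr : ∀ z ∈ P.roots, 1 < ‖z‖ := by
    intro z hz
    by_contra hc
    exact hPe z (not_lt.mp hc) ((mem_roots hP0).mp hz)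
  have cP : P.roots.card = P.natDegree := IsAlgClosed.card_roots_eq_natDegree
  have cR : R.roots.card = R.natDegree := IsAlgClosed.card_roots_eq_natDegree
  rw [hPR, roots_mul (mul_ne_zero hP0 hR0), natDegree_mul hP0 hR0]
  refine ⟨?_, ?_, ?_⟩
  · rw [Multiset.filter_add, Multiset.filter_eq_self.mpr hRr,
      Multiset.filter_eq_nil.mpr fun z hz => not_lt.mpr (hPr z hz).le, zero_add, cR, hRdeg]
  · intro z hz
    rcases Multiset.mem_add.mp hz with h | h
    · exact (hPr z h).ne'
    · exact (hRr z h).ne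
  · rw [Multiset.filter_add, Multiset.filter_eq_self.mpr hPr,
      Multiset.filter_eq_nil.mpr fun z hz => not_lt.mpr (hRr z hz).le, add_zero, cP, hRdeg]
    omega
end
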